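/- Let N be a function assigning a rational number to every finite tuple of positive integers having exactly zero or exactly two odd coordinates. Suppose that: (i) for every r ≥ 1, N(2, …, 2) = 2^{r−1}(r−1)! for the constant tuple with r entries equal to 2; (ii) N is invariant under permuting the coordinates of its argument; (iii) for every r-tuple a of positive even integers, with ã := (a₁+2, a₂, …, a_r), one has (a₁+1)(a₁+2)·E(a)·N(a) = ⌊ã₁/2⌋·⌊(ã₁−1)/2⌋·V(ã)·N(ã); (iv) for every (r+1)-tuple a of positive integers with a_{r+1} ≥ 2 that is either all even or has exactly two odd coordinates one of which is a_{r+1}, with ã := (a₁+1, a₂, …, a_r, a_{r+1}−1), one has (a₁+1)·⌊a_{r+1}/2⌋·N(a) = ⌊ã₁/2⌋·(ã_{r+1}+1)·N(ã); and (v) for every (r+1)-tuple a = (a₁, …, a_r, 1) with exactly two odd coordinates, with ã := (a₁+1, a₂, …, a_r), one has (a₁+1)·N(a) = ⌊ã₁/2⌋·V(ã)·N(ã). Then N(a) = T(a) for every such tuple a, where T is the Tutte slicings value. In particular these identities, the initial condition, and exchangeability uniquely determine the numbers of bipartite and quasibipartite plane maps with prescribed face degrees, yielding Tutte's formula of slicings.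 -/

import Mathlib

/-- `α(x) = x! / (⌊x/2⌋! ⌊(x−1)/2⌋!)`, viewed as a rational number. -/
def alphaQ (x : ℕ) : ℚ :=
  (Nat.factorial x : ℚ) /
    ((Nat.factorial (x / 2) : ℚ) * (Nat.factorial ((x - 1) / 2) : ℚ))

/-- `E(a) = (1/2) ∑ᵢ aᵢ`, the number of edges of a map of type `a`. -/
def Ev (a : List ℕ) : ℕ := a.sum / 2

/-- `V(a) = E(a) − n + 2`, the number of vertices of a map of type `a`. -/
def Vv (a : List ℕ) : ℕ := Ev a + 2 - a.length

/-- Tutte's slicings value `T(a) = ((E(a)−1)! / V(a)!) · ∏ᵢ α(aᵢ)`. -/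
def Tv (a : List ℕ) : ℚ :=
  (Nat.factorial (Ev a - 1) : ℚ) / (Nat.factorial (Vv a) : ℚ) * (a.map alphaQ).prod

/-- A tuple of positive integers having exactly zero or exactly two odd
coordinates (a bipartite or quasibipartite type). -/
def ValidType (a : List ℕ) : Prop :=
  (∀ x ∈ a, 0 < x) ∧
    (a.countP (fun x => x % 2 = 1) = 0 ∨ a.countP (fun x => x % 2 = 1) = 2)

theorem alphaQ_succ (x : ℕ) (hx : 0 < x) :
    alphaQ (x + 1) * (((x + 1) / 2 : ℕ) : ℚ) = ((x : ℚ) + 1) * alphaQ x := by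
  obtain ⟨y, rfl⟩ : ∃ y, x = y + 1 := ⟨x - 1, by omega⟩
  unfold alphaQ
  have h1 : (y + 1 + 1) / 2 = y / 2 + 1 := by omega
  simp only [Nat.add_sub_cancel, h1, Nat.factorial_succ (y + 1), Nat.factorial_succ (y / 2)]
  have e1 : (Nat.factorial (y / 2) : ℚ) ≠ 0 := by positivity
  have e2 : (Nat.factorial ((y + 1) / 2) : ℚ) ≠ 0 := by positivity
  have e3 : ((y / 2 : ℕ) : ℚ) + 1 ≠ 0 := by positivity
  push_cast
  field_simp

theorem alphaQ_one : alphaQ 1 = 1 := by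
  simp [alphaQ]

theorem good_sum (l : List ℕ) (h0 : ∀ x ∈ l, 0 < x) (h : ∀ x ∈ l, Even x) :
    ∃ t, l.sum = 2 * (l.length + t) := by
  induction l with
  | nil => exact ⟨0, by simp⟩
  | cons a l ih =>
    obtain ⟨t, ht⟩ := ih (fun x hx => h0 x (by simp [hx])) (fun x hx => h x (by simp [hx]))
    obtain ⟨k, hk⟩ := h a (by simp)
    have := h0 a (by simp)
    refine ⟨t + (k - 1), ?_⟩
    simp only [List.sum_cons, List.length_cons]
    omega

theorem Tv_perm (a b : List ℕ) (h : a.Perm b) : Tv a = Tv b := by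
  unfold Tv Vv Ev
  rw [h.sum_eq, h.length_eq, (h.map alphaQ).prod_eq]

theorem countP_zero_even (l : List ℕ) (h : l.countP (fun x => x % 2 = 1) = 0) :
    ∀ x ∈ l, Even x := by
  intro x hx
  have := List.countP_eq_zero.mp h x hx
  simp at this
  exact Nat.even_iff.mpr this

theorem even_countP_zero (l : List ℕ) (h : ∀ x ∈ l, Even x) :
    l.countP (fun x => x % 2 = 1) = 0 := by
  apply List.countP_eq_zero.mpr
  intro x hx
  have := Nat.even_iff.mp (h x hx)
  simp [this]

theorem extract_odd (l : List ℕ) (m : ℕ) (h : l.countP (fun x => x % 2 = 1) = m + 1) :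
    ∃ x l', x % 2 = 1 ∧ l.Perm (x :: l') ∧ l'.countP (fun x => x % 2 = 1) = m := by
  obtain ⟨x, hx, hx1⟩ := List.countP_pos_iff.mp (show 0 < l.countP (fun x => x % 2 = 1) by omega)
  have hp := List.perm_cons_erase hx
  refine ⟨x, l.erase x, by simpa using hx1, hp, ?_⟩
  have := hp.countP_eq (fun x => decide (x % 2 = 1))
  simp only [List.countP_cons, hx1, if_true] at this
  omega

theorem Tv_grow (a : ℕ) (rest : List ℕ) (h0 : ∀ x ∈ a :: rest, 0 < x)
    (h : ∀ x ∈ a :: rest, Even x) :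
    ((a : ℚ) + 1) * ((a : ℚ) + 2) * (Ev (a :: rest) : ℚ) * Tv (a :: rest) =
        (((a + 2) / 2 : ℕ) : ℚ) * (((a + 2 - 1) / 2 : ℕ) : ℚ) *
          (Vv ((a + 2) :: rest) : ℚ) * Tv ((a + 2) :: rest) := by
  obtain ⟨t, ht⟩ := good_sum (a :: rest) h0 h
  have ha := h0 a (by simp)
  simp only [List.sum_cons, List.length_cons] at ht
  have e1 : Ev (a :: rest) = rest.length + t + 1 := by
    simp only [Ev, List.sum_cons]; omega
  have e2 : Ev ((a + 2) :: rest) = rest.length + t + 1 + 1 := by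
    simp only [Ev, List.sum_cons]; omega
  have v1 : Vv (a :: rest) = t + 2 := by
    simp only [Vv, e1, List.length_cons]; omega
  have v2 : Vv ((a + 2) :: rest) = t + 2 + 1 := by
    simp only [Vv, e2, List.length_cons]; omega
  have A1 := alphaQ_succ a ha
  have A2 := alphaQ_succ (a + 1) (by omega)
  have key : alphaQ (a + 2) * (((a + 2) / 2 : ℕ) : ℚ) * (((a + 2 - 1) / 2 : ℕ) : ℚ)
      = ((a : ℚ) + 1) * ((a : ℚ) + 2) * alphaQ a := by
    have h3 : a + 2 - 1 = a + 1 := by omega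
    rw [h3]
    push_cast at A2 A1 ⊢
    rw [A2, mul_assoc, A1]; ring
  unfold Tv
  rw [e1, e2, v1, v2]
  simp only [Nat.add_sub_cancel, List.map_cons, List.prod_cons, Nat.factorial_succ (t + 2),
    Nat.factorial_succ (rest.length + t)]
  have f1 : (Nat.factorial (t + 2) : ℚ) ≠ 0 := by positivity
  have f3 : ((t + 2 : ℕ) : ℚ) + 1 ≠ 0 := by positivity
  generalize (List.map alphaQ rest).prod = P
  generalize (((a + 2) / 2 : ℕ) : ℚ) = c1 at *
  generalize (((a + 2 - 1) / 2 : ℕ) : ℚ) = c2 at *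
  rw [Nat.cast_mul, Nat.cast_mul, Nat.cast_add (t + 2) 1, Nat.cast_one]
  field_simp
  linear_combination (-P) * key

theorem Tv_transfer (a b : ℕ) (mid : List ℕ) (ha : 0 < a) (hb : 2 ≤ b) :
    ((a : ℚ) + 1) * ((b / 2 : ℕ) : ℚ) * Tv (a :: (mid ++ [b])) =
        (((a + 1) / 2 : ℕ) : ℚ) * (((b - 1 : ℕ) : ℚ) + 1) *
          Tv ((a + 1) :: (mid ++ [b - 1])) := by
  obtain ⟨c, rfl⟩ : ∃ c, b = c + 1 := ⟨b - 1, by omega⟩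
  have A1 := alphaQ_succ a ha
  have A2 := alphaQ_succ c (by omega)
  have hs : Ev ((a + 1) :: (mid ++ [c])) = Ev (a :: (mid ++ [c + 1])) := by
    simp only [Ev, List.sum_cons, List.sum_append, List.sum_nil]
    congr 1; omega
  have hv : Vv ((a + 1) :: (mid ++ [c])) = Vv (a :: (mid ++ [c + 1])) := by
    simp only [Vv, hs]; simp
  simp only [Nat.add_sub_cancel]
  unfold Tv
  rw [hs, hv]
  simp only [List.map_cons, List.map_append, List.prod_cons, List.prod_append, List.map_nil,
    List.prod_nil]
  generalize ((Nat.factorial (Ev (a :: (mid ++ [c + 1])) - 1) : ℚ) /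
    (Nat.factorial (Vv (a :: (mid ++ [c + 1]))) : ℚ)) = Q
  generalize (List.map alphaQ mid).prod = P
  linear_combination ((a : ℚ) + 1) * Q * P * alphaQ a * A2
    - ((c : ℚ) + 1) * Q * P * alphaQ c * A1

theorem Tv_transfer1 (a : ℕ) (mid : List ℕ) (ha : 0 < a)
    (h0 : ∀ x ∈ (a + 1) :: mid, 0 < x) (h : ∀ x ∈ (a + 1) :: mid, Even x) :
    ((a : ℚ) + 1) * Tv (a :: (mid ++ [1])) =
        (((a + 1) / 2 : ℕ) : ℚ) * (Vv ((a + 1) :: mid) : ℚ) * Tv ((a + 1) :: mid) := by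
  obtain ⟨t, ht⟩ := good_sum _ h0 h
  have A1 := alphaQ_succ a ha
  have hs : Ev (a :: (mid ++ [1])) = Ev ((a + 1) :: mid) := by
    simp only [Ev, List.sum_cons, List.sum_append, List.sum_nil]
    congr 1; omega
  have hE : Ev ((a + 1) :: mid) = ((a + 1) :: mid).length + t := by
    unfold Ev; omega
  have v1 : Vv (a :: (mid ++ [1])) = t + 1 := by
    simp only [Vv, hs, hE]; simp; omega
  have v2 : Vv ((a + 1) :: mid) = t + 1 + 1 := by
    simp only [Vv, hE]; omega
  unfold Tv
  rw [hs, v1, v2]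
  simp only [List.map_cons, List.map_append, List.prod_cons, List.prod_append, List.map_nil,
    List.prod_nil, alphaQ_one, Nat.factorial_succ (t + 1)]
  have f1 : (Nat.factorial (t + 1) : ℚ) ≠ 0 := by positivity
  have f3 : ((t + 1 : ℕ) : ℚ) + 1 ≠ 0 := by positivity
  generalize (List.map alphaQ mid).prod = P
  generalize (Nat.factorial (Ev ((a + 1) :: mid) - 1) : ℚ) = Q
  rw [Nat.cast_mul, Nat.cast_add (t + 1) 1, Nat.cast_one]
  generalize (((a + 1) / 2 : ℕ) : ℚ) = c1 at *
  field_simp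
  linear_combination (-(Q * P)) * A1

theorem Tv_init (r : ℕ) (hr : 1 ≤ r) :
    Tv (List.replicate r 2) = 2 ^ (r - 1) * (Nat.factorial (r - 1) : ℚ) := by
  obtain ⟨k, rfl⟩ : ∃ k, r = k + 1 := ⟨r - 1, by omega⟩
  have e : Ev (List.replicate (k + 1) 2) = k + 1 := by simp [Ev]
  have v : Vv (List.replicate (k + 1) 2) = 2 := by simp [Vv, e]
  have h2 : alphaQ 2 = 2 := by simp [alphaQ]
  unfold Tv
  rw [e, v]
  simp [h2, pow_succ]
  ring

/-- Any function `N` on bipartite/quasibipartite types satisfying the initial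
condition (i) on the tuples `(2,…,2)`, exchangeability (ii), and the three
recurrences (iii)–(v) of Propositions 1, 3 and 4 of the paper must coincide
with the Tutte slicings value `T`: these data uniquely determine the numbers
of bipartite and quasibipartite plane maps with prescribed face degrees. -/
theorem stmt9 (N : List ℕ → ℚ)
    (hinit : ∀ r : ℕ, 1 ≤ r →
      N (List.replicate r 2) = 2 ^ (r - 1) * (Nat.factorial (r - 1) : ℚ))
    (hperm : ∀ a b : List ℕ, ValidType a → a.Perm b → N a = N b)
    (hgrow : ∀ (a₁ : ℕ) (rest : List ℕ),
      (∀ x ∈ a₁ :: rest, 0 < x) → (∀ x ∈ a₁ :: rest, Even x) →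
      ((a₁ : ℚ) + 1) * ((a₁ : ℚ) + 2) * (Ev (a₁ :: rest) : ℚ) * N (a₁ :: rest) =
        (((a₁ + 2) / 2 : ℕ) : ℚ) * (((a₁ + 2 - 1) / 2 : ℕ) : ℚ) *
          (Vv ((a₁ + 2) :: rest) : ℚ) * N ((a₁ + 2) :: rest))
    (htransfer : ∀ (a₁ alast : ℕ) (mid : List ℕ),
      (∀ x ∈ a₁ :: (mid ++ [alast]), 0 < x) → 2 ≤ alast →
      ((∀ x ∈ a₁ :: (mid ++ [alast]), Even x) ∨
        ((a₁ :: (mid ++ [alast])).countP (fun x => x % 2 = 1) = 2 ∧ Odd alast)) →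
      ((a₁ : ℚ) + 1) * ((alast / 2 : ℕ) : ℚ) * N (a₁ :: (mid ++ [alast])) =
        (((a₁ + 1) / 2 : ℕ) : ℚ) * (((alast - 1 : ℕ) : ℚ) + 1) *
          N ((a₁ + 1) :: (mid ++ [alast - 1])))
    (htransfer1 : ∀ (a₁ : ℕ) (mid : List ℕ),
      (∀ x ∈ a₁ :: mid, 0 < x) →
      (a₁ :: (mid ++ [1])).countP (fun x => x % 2 = 1) = 2 →
      ((a₁ : ℚ) + 1) * N (a₁ :: (mid ++ [1])) =
        (((a₁ + 1) / 2 : ℕ) : ℚ) * (Vv ((a₁ + 1) :: mid) : ℚ) * N ((a₁ + 1) :: mid)) :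
    ∀ a : List ℕ, a ≠ [] → ValidType a → N a = Tv a := by
  -- the all-even case
  have heven : ∀ n : ℕ, ∀ a : List ℕ, a.sum = n → a ≠ [] → (∀ x ∈ a, 0 < x) →
      (∀ x ∈ a, Even x) → N a = Tv a := by
    intro n
    induction n using Nat.strong_induction_on with
    | _ n ih =>
      intro a hn hne h0 h
      by_cases hall : ∀ x ∈ a, x = 2
      · have ha : a = List.replicate a.length 2 := List.eq_replicate_iff.mpr ⟨rfl, hall⟩
        have hl : 1 ≤ a.length := List.length_pos_iff.mpr hne
        rw [ha, hinit _ hl, Tv_init _ hl]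
      · push Not at hall
        obtain ⟨x, hx, hx2⟩ := hall
        have hp := List.perm_cons_erase hx
        have hpos := h0 x hx
        obtain ⟨k, hk⟩ := h x hx
        obtain ⟨y, rfl⟩ : ∃ y, x = y + 2 := ⟨x - 2, by omega⟩
        have hy0 : 0 < y := by omega
        have hye : Even y := ⟨k - 1, by omega⟩
        set rest := a.erase (y + 2) with hrest
        have hr0 : ∀ z ∈ rest, 0 < z := fun z hz => h0 z (List.mem_of_mem_erase hz)
        have hre : ∀ z ∈ rest, Even z := fun z hz => h z (List.mem_of_mem_erase hz)
        have g0 : ∀ z ∈ y :: rest, 0 < z := by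
          intro z hz
          rcases List.mem_cons.mp hz with rfl | hz
          exacts [hy0, hr0 z hz]
        have ge : ∀ z ∈ y :: rest, Even z := by
          intro z hz
          rcases List.mem_cons.mp hz with rfl | hz
          exacts [hye, hre z hz]
        have hsum := hp.sum_eq
        simp only [List.sum_cons] at hsum
        have hI := ih (y + rest.sum) (by omega) (y :: rest) (by simp) (by simp) g0 ge
        have e1 := hgrow y rest g0 ge
        have e2 := Tv_grow y rest g0 ge
        rw [hI, e2] at e1
        have c1 : (((y + 2) / 2 : ℕ) : ℚ) ≠ 0 := by
          have : (y + 2) / 2 ≠ 0 := by omega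
          exact_mod_cast this
        have c2 : (((y + 2 - 1) / 2 : ℕ) : ℚ) ≠ 0 := by
          have : (y + 2 - 1) / 2 ≠ 0 := by omega
          exact_mod_cast this
        have c3 : (Vv ((y + 2) :: rest) : ℚ) ≠ 0 := by
          obtain ⟨t, ht⟩ := good_sum _ g0 ge
          have : Vv ((y + 2) :: rest) ≠ 0 := by
            simp only [List.sum_cons, List.length_cons] at ht
            simp only [Vv, Ev, List.sum_cons, List.length_cons]
            omega
          exact_mod_cast this
        rw [hperm a _ ⟨h0, Or.inl (even_countP_zero a h)⟩ hp, Tv_perm a _ hp]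
        exact (mul_left_cancel₀ (mul_ne_zero (mul_ne_zero c1 c2) c3) e1).symm
  intro a hne hval
  obtain ⟨h0, hc | hc⟩ := hval
  · exact heven _ a rfl hne h0 (countP_zero_even a hc)
  · obtain ⟨x, l1, hx, hp1, hc1⟩ := extract_odd a 1 hc
    obtain ⟨y, mid, hy, hp2, hc2⟩ := extract_odd l1 0 hc1
    have hme := countP_zero_even mid hc2
    have hp : a.Perm (y :: (mid ++ [x])) := by
      refine hp1.trans ((hp2.cons x).trans ?_)
      refine (List.Perm.swap y x mid).trans (List.Perm.cons y ?_)
      exact (List.perm_append_singleton x mid).symm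
    have hc' : (y :: (mid ++ [x])).countP (fun x => x % 2 = 1) = 2 := by
      exact (hp.countP_eq _).symm.trans hc
    have h0' : ∀ z ∈ y :: (mid ++ [x]), 0 < z := fun z hz => h0 z (hp.mem_iff.mpr hz)
    have hy0 : 0 < y := by omega
    have hm0 : ∀ z ∈ mid, 0 < z := fun z hz => h0' z (by simp [hz])
    have hye : Even (y + 1) := Nat.even_iff.mpr (by omega)
    have hyq : (y : ℚ) + 1 ≠ 0 := by positivity
    rw [hperm a _ ⟨h0, Or.inr hc⟩ hp, Tv_perm a _ hp]
    by_cases hx1 : x = 1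
    · subst hx1
      have g0 : ∀ z ∈ (y + 1) :: mid, 0 < z := by
        intro z hz
        rcases List.mem_cons.mp hz with rfl | hz
        exacts [by omega, hm0 z hz]
      have ge : ∀ z ∈ (y + 1) :: mid, Even z := by
        intro z hz
        rcases List.mem_cons.mp hz with rfl | hz
        exacts [hye, hme z hz]
      have e1 := htransfer1 y mid (by
        intro z hz
        rcases List.mem_cons.mp hz with rfl | hz
        exacts [hy0, hm0 z hz]) hc'
      rw [heven _ _ rfl (by simp) g0 ge, ← Tv_transfer1 y mid hy0 g0 ge] at e1
      exact mul_left_cancel₀ hyq e1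
    · have hx2 : 2 ≤ x := by omega
      have e1 := htransfer y x mid h0' hx2 (Or.inr ⟨hc', Nat.odd_iff.mpr hx⟩)
      have g0 : ∀ z ∈ (y + 1) :: (mid ++ [x - 1]), 0 < z := by
        intro z hz
        simp only [List.mem_cons, List.mem_append, List.not_mem_nil, or_false] at hz
        rcases hz with rfl | hz | rfl
        exacts [by omega, hm0 z hz, by omega]
      have ge : ∀ z ∈ (y + 1) :: (mid ++ [x - 1]), Even z := by
        intro z hz
        simp only [List.mem_cons, List.mem_append, List.not_mem_nil, or_false] at hz
        rcases hz with rfl | hz | rfl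
        exacts [hye, hme z hz, Nat.even_iff.mpr (by omega)]
      rw [heven _ _ rfl (by simp) g0 ge, ← Tv_transfer y x mid hy0 hx2] at e1
      have c1 : ((x / 2 : ℕ) : ℚ) ≠ 0 := by
        have : x / 2 ≠ 0 := by omega
        exact_mod_cast this
      exact mul_left_cancel₀ (mul_ne_zero hyq c1) e1
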